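/- Let 𝚫 ∈ 𝒜 and let m be the number of 3-cycles in Δ (counted up to cyclic permutation). Then f_𝚫 = m·[0,3] + [|Δ₀| + 1 − m, |Δ₀| − 1 − 2m]. -/

import Mathlib

/-! Common formalization infrastructure for gentle quivers (Bobinski–Buan,
    "Derived equivalence classification of gentle cluster tilted algebras"). -/

/-- A (finite) quiver with (length-two, monomial) relations.  Vertices and
arrows are natural numbers; `V` and `A` are the finite sets of vertices and
arrows, `src`/`tgt` give the start and terminus of each arrow, and `rel` is the
set of relations, a relation `(a, b)` standing for the length-two path
`a·b` (so `src a = tgt b`). -/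
structure QuivRel where
  V : Finset ℕ
  A : Finset ℕ
  src : ℕ → ℕ
  tgt : ℕ → ℕ
  rel : Finset (ℕ × ℕ)

namespace GentleQuiv

/-- Two vertices are adjacent if some arrow joins them (in either direction). -/
def Adj (Q : QuivRel) (x y : ℕ) : Prop :=
  ∃ a ∈ Q.A, (Q.src a = x ∧ Q.tgt a = y) ∨ (Q.src a = y ∧ Q.tgt a = x)

/-- A quiver is connected if any two of its vertices are joined by a walk. -/
def Connected (Q : QuivRel) : Prop :=
  ∀ x ∈ Q.V, ∀ y ∈ Q.V, Relation.ReflTransGen (Adj Q) x y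

/-- `l = [α₁, …, αₙ]` is a (nonempty) path in the quiver: consecutive arrows
compose, i.e. `s αᵢ = t αᵢ₊₁`. -/
def IsPathList (Q : QuivRel) (l : List ℕ) : Prop :=
  l ≠ [] ∧ (∀ a ∈ l, a ∈ Q.A) ∧ l.Chain' (fun a b => Q.src a = Q.tgt b)

/-- The path `l` contains a subpath (two consecutive arrows) lying in `R`. -/
def HasRelSubpath (Q : QuivRel) (l : List ℕ) : Prop :=
  ∃ a b, (a, b) ∈ Q.rel ∧ [a, b] <:+: l

/-- Gentle quiver: connected, relations are composable pairs of arrows, at most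
two arrows in/out of every vertex, the usual gentleness conditions on
relations, and a global bound forcing finite dimensionality. -/
def IsGentle (Q : QuivRel) : Prop :=
  Q.V.Nonempty ∧
  (∀ a ∈ Q.A, Q.src a ∈ Q.V ∧ Q.tgt a ∈ Q.V) ∧
  Connected Q ∧
  (∀ ρ ∈ Q.rel, ρ.1 ∈ Q.A ∧ ρ.2 ∈ Q.A ∧ Q.src ρ.1 = Q.tgt ρ.2) ∧
  (∀ x, (Q.A.filter fun a => Q.src a = x).card ≤ 2) ∧
  (∀ x, (Q.A.filter fun a => Q.tgt a = x).card ≤ 2) ∧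
  (∀ a ∈ Q.A, (Q.A.filter fun b => Q.src b = Q.tgt a ∧ (b, a) ∉ Q.rel).card ≤ 1) ∧
  (∀ a ∈ Q.A, (Q.A.filter fun c => Q.tgt c = Q.src a ∧ (a, c) ∉ Q.rel).card ≤ 1) ∧
  (∀ a ∈ Q.A, (Q.A.filter fun b => (b, a) ∈ Q.rel).card ≤ 1) ∧
  (∀ a ∈ Q.A, (Q.A.filter fun c => (a, c) ∈ Q.rel).card ≤ 1) ∧
  (∃ n : ℕ, ∀ l : List ℕ, IsPathList Q l → l.length = n → HasRelSubpath Q l)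

/-- A choice of functions `σ, τ : Δ₁ → {±1}` as in Avella-Alaminos–Geiss. -/
structure SigmaTau (Q : QuivRel) where
  σ : ℕ → ℤ
  τ : ℕ → ℤ
  σ_pm : ∀ a ∈ Q.A, σ a = 1 ∨ σ a = -1
  τ_pm : ∀ a ∈ Q.A, τ a = 1 ∨ τ a = -1
  σ_src : ∀ a ∈ Q.A, ∀ b ∈ Q.A, a ≠ b → Q.src a = Q.src b → σ a = -σ b
  τ_tgt : ∀ a ∈ Q.A, ∀ b ∈ Q.A, a ≠ b → Q.tgt a = Q.tgt b → τ a = -τ b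
  rel_iff : ∀ a ∈ Q.A, ∀ b ∈ Q.A, Q.src a = Q.tgt b → ((a, b) ∈ Q.rel ↔ σ a = τ b)

/-- A thread: either a trivial path/antipath `1_{x,ε}` at a vertex `x` with a
sign `ε`, or a sequence of arrows of positive length. -/
inductive Thread where
  | triv (x : ℕ) (ε : ℤ) : Thread
  | arrows (l : List ℕ) : Thread
deriving DecidableEq

/-- Source of a thread. -/
def Thread.source (Q : QuivRel) : Thread → ℕ
  | .triv x _ => x
  | .arrows l => Q.src l.getLast!

/-- Target of a thread. -/
def Thread.target (Q : QuivRel) : Thread → ℕ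
  | .triv x _ => x
  | .arrows l => Q.tgt l.head!

/-- `σω` (for paths and antipaths alike; `σ 1_{x,ε} = ε = σ 1'_{x,ε}`). -/
def Thread.sigma {Q : QuivRel} (st : SigmaTau Q) : Thread → ℤ
  | .triv _ ε => ε
  | .arrows l => st.σ l.getLast!

/-- `τω` when `ω` is regarded as a path (`τ 1_{x,ε} = -ε`). -/
def Thread.tauPath {Q : QuivRel} (st : SigmaTau Q) : Thread → ℤ
  | .triv _ ε => -ε
  | .arrows l => st.τ l.head!

/-- `τω` when `ω` is regarded as an antipath (`τ 1'_{x,ε} = ε`). -/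
def Thread.tauAnti {Q : QuivRel} (st : SigmaTau Q) : Thread → ℤ
  | .triv _ ε => ε
  | .arrows l => st.τ l.head!

/-- Length of a thread. -/
def Thread.len : Thread → ℕ
  | .triv _ _ => 0
  | .arrows l => l.length

/-- A path in `𝚫` of positive length (no two consecutive arrows in `R`). -/
def IsPermList (Q : QuivRel) (l : List ℕ) : Prop :=
  IsPathList Q l ∧ l.Chain' (fun a b => (a, b) ∉ Q.rel)

/-- An antipath in `𝚫` of positive length (all consecutive pairs in `R`). -/
def IsAntiList (Q : QuivRel) (l : List ℕ) : Prop :=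
  l ≠ [] ∧ (∀ a ∈ l, a ∈ Q.A) ∧ l.Chain' (fun a b => (a, b) ∈ Q.rel)

/-- A thread is a path in `𝚫` (including trivial ones). -/
def IsPathThread (Q : QuivRel) : Thread → Prop
  | .triv x ε => x ∈ Q.V ∧ (ε = 1 ∨ ε = -1)
  | .arrows l => IsPermList Q l

/-- A thread is an antipath in `𝚫` (including trivial ones). -/
def IsAntiThread (Q : QuivRel) : Thread → Prop
  | .triv x ε => x ∈ Q.V ∧ (ε = 1 ∨ ε = -1)
  | .arrows l => IsAntiList Q l

/-- `w ∈ ℳ`: `w` is a maximal path of `𝚫`. -/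
def InM (Q : QuivRel) (st : SigmaTau Q) (w : Thread) : Prop :=
  IsPathThread Q w ∧
  (¬ ∃ a ∈ Q.A, Q.src a = w.target Q ∧ st.σ a = -(w.tauPath st)) ∧
  (¬ ∃ b ∈ Q.A, Q.tgt b = w.source Q ∧ st.τ b = -(w.sigma st))

/-- `w ∈ 𝒩`: `w` is a maximal antipath of `𝚫`. -/
def InN (Q : QuivRel) (st : SigmaTau Q) (w : Thread) : Prop :=
  IsAntiThread Q w ∧
  (¬ ∃ a ∈ Q.A, Q.src a = w.target Q ∧ st.σ a = w.tauAnti st) ∧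
  (¬ ∃ b ∈ Q.A, Q.tgt b = w.source Q ∧ st.τ b = w.sigma st)

/-- The graph of the bijection `Φ = φ ∘ ψ : 𝒩 → 𝒩`:  `PhiRel Q st w w'` holds
iff `w, w' ∈ 𝒩` and the maximal path `ψ w` (with `s(ψw) = sw`, `σ(ψw) = -σw`)
satisfies `t w' = t (ψ w)` and `τ w' = -τ(ψ w)`, i.e. `w' = φ (ψ w) = Φ w`. -/
def PhiRel (Q : QuivRel) (st : SigmaTau Q) (w w' : Thread) : Prop :=
  InN Q st w ∧ InN Q st w' ∧
  ∃ m : Thread, InM Q st m ∧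
    m.source Q = w.source Q ∧ m.sigma st = -(w.sigma st) ∧
    w'.target Q = m.target Q ∧ w'.tauAnti st = -(m.tauPath st)

/-- `O` is an orbit of the `ℤ`-action on `𝒩` induced by `Φ`. -/
def NOrbit (Q : QuivRel) (st : SigmaTau Q) (O : Set Thread) : Prop :=
  ∃ w, InN Q st w ∧ O = {w' | Relation.EqvGen (PhiRel Q st) w w'}

/-- `p(𝒪) = |𝒪|` for an orbit `𝒪 ∈ 𝒩/ℤ`. -/
noncomputable def pN (O : Set Thread) : ℕ := O.ncard

/-- `q(𝒪) = Σ_{ω ∈ 𝒪} ℓ(ω)` for an orbit `𝒪 ∈ 𝒩/ℤ`. -/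
noncomputable def qN (O : Set Thread) : ℕ := ∑ᶠ w ∈ O, Thread.len w

/-- `a ∈ 𝒞`: the arrow `a` occurs in no maximal antipath. -/
def InC (Q : QuivRel) (st : SigmaTau Q) (a : ℕ) : Prop :=
  a ∈ Q.A ∧ ¬ ∃ l : List ℕ, InN Q st (.arrows l) ∧ a ∈ l

/-- The graph of the bijection `Ψ : 𝒞 → 𝒞`. -/
def PsiRel (Q : QuivRel) (st : SigmaTau Q) (a b : ℕ) : Prop :=
  InC Q st a ∧ InC Q st b ∧ Q.tgt b = Q.src a ∧ st.τ b = st.σ a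

/-- `O` is an orbit of the `ℤ`-action on `𝒞` induced by `Ψ`. -/
def COrbit (Q : QuivRel) (st : SigmaTau Q) (O : Set ℕ) : Prop :=
  ∃ a, InC Q st a ∧ O = {b | Relation.EqvGen (PsiRel Q st) a b}

/-- The Avella-Alaminos–Geiss invariant `f_𝚫 : ℕ² → ℕ`:  `f_𝚫 (p,q)` counts the
orbits `𝒪 ∈ 𝒩/ℤ ⊔ 𝒞/ℤ` with `p(𝒪) = p` and `q(𝒪) = q`. -/
noncomputable def fInv (Q : QuivRel) (st : SigmaTau Q) : ℕ × ℕ → ℕ := fun pq =>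
  {O : Set Thread | NOrbit Q st O ∧ pN O = pq.1 ∧ qN O = pq.2}.ncard +
  {O : Set ℕ | COrbit Q st O ∧ pq.1 = 0 ∧ O.ncard = pq.2}.ncard

/-- `[p, q] : ℕ² → ℕ`, the characteristic function of `{(p, q)}`. -/
def charFn (p q : ℕ) : ℕ × ℕ → ℕ := fun pq => if pq = (p, q) then 1 else 0

/-- Tree type: `|Δ₀| = |Δ₁| + 1`. -/
def TreeType (Q : QuivRel) : Prop := Q.V.card = Q.A.card + 1

/-- Removing a set of arrows (keeping all vertices); relations containing a
removed arrow are discarded. -/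
def deleteArrows (Q : QuivRel) (S : Finset ℕ) : QuivRel where
  V := Q.V
  A := Q.A \ S
  src := Q.src
  tgt := Q.tgt
  rel := Q.rel.filter fun ρ => ρ.1 ∉ S ∧ ρ.2 ∉ S

/-- Branch arrow: removing it disconnects the quiver. -/
def BranchArrow (Q : QuivRel) (a : ℕ) : Prop :=
  a ∈ Q.A ∧ ¬ Connected (deleteArrows Q {a})

/-- Cycle arrow: removing it leaves the quiver connected. -/
def CycleArrow (Q : QuivRel) (a : ℕ) : Prop :=
  a ∈ Q.A ∧ Connected (deleteArrows Q {a})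

/-- Branch relation: a relation one of whose arrows is a branch arrow. -/
def BranchRel (Q : QuivRel) (ρ : ℕ × ℕ) : Prop :=
  ρ ∈ Q.rel ∧ (BranchArrow Q ρ.1 ∨ BranchArrow Q ρ.2)

/-- A relation `ρ = (α, β)` is isolated if the antipath `(α, β)` is a maximal
antipath, i.e. `ρ ∈ 𝒩`. -/
def Isolated (Q : QuivRel) (st : SigmaTau Q) (ρ : ℕ × ℕ) : Prop :=
  ρ ∈ Q.rel ∧ InN Q st (.arrows [ρ.1, ρ.2])

/-- `Q'` is obtained from `Q` by completing the relations from `R₀`, the new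
arrow attached to `ρ ∈ R₀` being `γ ρ`. -/
structure IsCompletion (Q : QuivRel) (R0 : Finset (ℕ × ℕ)) (γ : ℕ × ℕ → ℕ)
    (Q' : QuivRel) : Prop where
  subset : R0 ⊆ Q.rel
  fresh : ∀ ρ ∈ R0, γ ρ ∉ Q.A
  inj : ∀ ρ ∈ R0, ∀ ρ' ∈ R0, γ ρ = γ ρ' → ρ = ρ'
  V_eq : Q'.V = Q.V
  A_eq : Q'.A = Q.A ∪ R0.image γ
  src_old : ∀ a ∈ Q.A, Q'.src a = Q.src a
  tgt_old : ∀ a ∈ Q.A, Q'.tgt a = Q.tgt a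
  src_new : ∀ ρ ∈ R0, Q'.src (γ ρ) = Q.tgt ρ.1
  tgt_new : ∀ ρ ∈ R0, Q'.tgt (γ ρ) = Q.src ρ.2
  rel_eq : Q'.rel = Q.rel ∪ R0.image (fun ρ => (γ ρ, ρ.1)) ∪
      R0.image (fun ρ => (ρ.2, γ ρ))

/-- A 3-cycle: three pairwise distinct arrows forming an oriented cycle. -/
def Is3Cycle (Q : QuivRel) (a0 a1 a2 : ℕ) : Prop :=
  a0 ∈ Q.A ∧ a1 ∈ Q.A ∧ a2 ∈ Q.A ∧ a0 ≠ a1 ∧ a1 ≠ a2 ∧ a0 ≠ a2 ∧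
  Q.src a0 = Q.tgt a1 ∧ Q.src a1 = Q.tgt a2 ∧ Q.src a2 = Q.tgt a0

/-- A triangle: a 3-cycle all of whose three compositions are relations. -/
def IsTriangleTriple (Q : QuivRel) (a0 a1 a2 : ℕ) : Prop :=
  Is3Cycle Q a0 a1 a2 ∧ (a0, a1) ∈ Q.rel ∧ (a1, a2) ∈ Q.rel ∧ (a2, a0) ∈ Q.rel

/-- The (unordered) set of arrows of a triangle. -/
def TriangleSet (Q : QuivRel) (O : Finset ℕ) : Prop :=
  ∃ a0 a1 a2, O = {a0, a1, a2} ∧ IsTriangleTriple Q a0 a1 a2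

/-- Branch triangle: removing any two of its arrows disconnects the quiver. -/
def BranchTriangle (Q : QuivRel) (O : Finset ℕ) : Prop :=
  TriangleSet Q O ∧ ∀ S ⊆ O, S.card = 2 → ¬ Connected (deleteArrows Q S)

/-- Free relation: a relation neither of whose arrows lies in `𝒞`. -/
def FreeRel (Q : QuivRel) (st : SigmaTau Q) (ρ : ℕ × ℕ) : Prop :=
  ρ ∈ Q.rel ∧ ¬ InC Q st ρ.1 ∧ ¬ InC Q st ρ.2

/-- The class `𝒜`: gentle quivers with `f_𝚫 = m·[0,3] + [p+m+2, p]`. -/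
def ClassA (Q : QuivRel) (st : SigmaTau Q) : Prop :=
  IsGentle Q ∧ ∃ m p : ℕ, ∀ x, fInv Q st x = m * charFn 0 3 x + charFn (p + m + 2) p x

/-- The class `Ã`: gentle quivers with
`f_𝚫 = (m₁+m₂)·[0,3] + [p+m₁, p] + [q+m₂, q]`, `p+m₁ > 0`, `q+m₂ > 0`. -/
def ClassAtilde (Q : QuivRel) (st : SigmaTau Q) : Prop :=
  IsGentle Q ∧ ∃ m1 m2 p q : ℕ, 0 < p + m1 ∧ 0 < q + m2 ∧
    ∀ x, fInv Q st x =
      (m1 + m2) * charFn 0 3 x + charFn (p + m1) p x + charFn (q + m2) q x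

/-- Isomorphism of quivers with relations. -/
def IsoQR (Q Q' : QuivRel) : Prop :=
  ∃ fV fA : ℕ → ℕ,
    Set.BijOn fV ↑Q.V ↑Q'.V ∧ Set.BijOn fA ↑Q.A ↑Q'.A ∧
    (∀ a ∈ Q.A, Q'.src (fA a) = fV (Q.src a) ∧ Q'.tgt (fA a) = fV (Q.tgt a)) ∧
    (∀ a ∈ Q.A, ∀ b ∈ Q.A, ((a, b) ∈ Q.rel ↔ (fA a, fA b) ∈ Q'.rel))

/-- The quiver has no loops. -/
def NoLoops (Q : QuivRel) : Prop := ∀ a ∈ Q.A, Q.src a ≠ Q.tgt a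

/-- The reflection at `x` is defined: every arrow starting at `x` admits a
(necessarily unique) companion arrow ending at `x` not bound by a relation. -/
def CanReflect (Q : QuivRel) (x : ℕ) : Prop :=
  x ∈ Q.V ∧ ∀ a ∈ Q.A, Q.src a = x → ∃ b ∈ Q.A, Q.tgt b = x ∧ (a, b) ∉ Q.rel

/-- `Q'` is the reflection of the gentle loop-free quiver `Q` at the vertex
`x`, following Brenner–Butler tilting. -/
def IsReflection (Q : QuivRel) (x : ℕ) (Q' : QuivRel) : Prop :=
  IsGentle Q ∧ NoLoops Q ∧ CanReflect Q x ∧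
  Q'.V = Q.V ∧ Q'.A = Q.A ∧
  (∀ a ∈ Q.A, Q.tgt a = x → Q'.src a = x ∧ Q'.tgt a = Q.src a) ∧
  (∀ a ∈ Q.A, Q.src a = x →
    ∀ b ∈ Q.A, Q.tgt b = x → (a, b) ∉ Q.rel → Q'.src a = Q.src b) ∧
  (∀ a ∈ Q.A, Q.tgt a ≠ x → Q.src a ≠ x → Q'.src a = Q.src a) ∧
  (∀ a ∈ Q.A, Q.tgt a ≠ x →
    ((∃ b ∈ Q.A, Q.tgt b = x ∧ Q.src b = Q.tgt a ∧ (b, a) ∈ Q.rel) → Q'.tgt a = x) ∧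
    ((¬ ∃ b ∈ Q.A, Q.tgt b = x ∧ Q.src b = Q.tgt a ∧ (b, a) ∈ Q.rel) →
      Q'.tgt a = Q.tgt a)) ∧
  (∀ a b : ℕ, (a, b) ∈ Q'.rel ↔
    (((a, b) ∈ Q.rel ∧ Q.tgt a ≠ x ∧ Q.src a ≠ x) ∨
     (a ∈ Q.A ∧ b ∈ Q.A ∧ Q.src a = x ∧ Q.tgt b = x ∧ (a, b) ∉ Q.rel) ∨
     (a ∈ Q.A ∧ b ∈ Q.A ∧ Q.tgt a = x ∧
       ∃ c ∈ Q.A, c ≠ a ∧ Q.tgt c = x ∧ Q.src c = Q.tgt b ∧ (c, b) ∈ Q.rel)))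

/-- The opposite quiver with relations. -/
def opQR (Q : QuivRel) : QuivRel where
  V := Q.V
  A := Q.A
  src := Q.tgt
  tgt := Q.src
  rel := Q.rel.image fun ρ => (ρ.2, ρ.1)

/-- Coreflection: the dual of reflection. -/
def IsCoreflection (Q : QuivRel) (x : ℕ) (Q' : QuivRel) : Prop :=
  IsReflection (opQR Q) x (opQR Q')

/-- One step of reflection equivalence: a reflection, a coreflection, or an
isomorphism of quivers with relations. -/
def RefStep (Q Q' : QuivRel) : Prop :=
  (∃ x, IsReflection Q x Q') ∨ (∃ x, IsCoreflection Q x Q') ∨ IsoQR Q Q'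

/-- Reflection equivalence: a finite sequence of reflections/coreflections,
up to isomorphism of quivers with relations. -/
def RefEquiv : QuivRel → QuivRel → Prop := Relation.ReflTransGen RefStep

/-- A cyclic orientation of a `1`-cycle quiver without branch arrows (i.e. a
cycle): enumerations of the vertices and arrows by `ZMod n` such that the
`i`-th arrow joins the `i`-th and `(i+1)`-st vertices. -/
structure CyclicOrientation (Q : QuivRel) (n : ℕ) where
  ev : ZMod n → ℕ
  ea : ZMod n → ℕ
  ev_mem : ∀ i, ev i ∈ Q.V
  ea_mem : ∀ i, ea i ∈ Q.A
  ev_inj : Function.Injective ev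
  ea_inj : Function.Injective ea
  ev_surj : ∀ v ∈ Q.V, ∃ i, ev i = v
  ea_surj : ∀ a ∈ Q.A, ∃ i, ea i = a
  compat : ∀ i : ZMod n,
    (Q.src (ea i) = ev i ∧ Q.tgt (ea i) = ev (i + 1)) ∨
    (Q.src (ea i) = ev (i + 1) ∧ Q.tgt (ea i) = ev i)

/-- Clockwise arrow with respect to a cyclic orientation. -/
def Clockwise (Q : QuivRel) {n : ℕ} (co : CyclicOrientation Q n) (a : ℕ) : Prop :=
  a ∈ Q.A ∧ ∃ i : ZMod n, co.ea i = a ∧ Q.src a = co.ev i ∧ Q.tgt a = co.ev (i + 1)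

/-- Anticlockwise arrow with respect to a cyclic orientation. -/
def Anticlockwise (Q : QuivRel) {n : ℕ} (co : CyclicOrientation Q n) (a : ℕ) : Prop :=
  a ∈ Q.A ∧ ∃ i : ZMod n, co.ea i = a ∧ Q.src a = co.ev (i + 1) ∧ Q.tgt a = co.ev i

end GentleQuiv

namespace GentleQuiv

section Aux

variable {Q : QuivRel} {st : SigmaTau Q}

/-- Relations are composable pairs of arrows. -/
def RelOK (Q : QuivRel) : Prop :=
  ∀ ρ ∈ Q.rel, ρ.1 ∈ Q.A ∧ ρ.2 ∈ Q.A ∧ Q.src ρ.1 = Q.tgt ρ.2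

lemma rel_iff' (st : SigmaTau Q) (h : RelOK Q) (a b : ℕ) :
    (a, b) ∈ Q.rel ↔ a ∈ Q.A ∧ b ∈ Q.A ∧ Q.src a = Q.tgt b ∧ st.σ a = st.τ b := by
  constructor
  · intro hab
    obtain ⟨ha, hb, hs⟩ := h _ hab
    exact ⟨ha, hb, hs, (st.rel_iff a ha b hb hs).1 hab⟩
  · rintro ⟨ha, hb, hs, ht⟩
    exact (st.rel_iff a ha b hb hs).2 ht

lemma tgt_inj (st : SigmaTau Q) {b c : ℕ} (hb : b ∈ Q.A) (hc : c ∈ Q.A)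
    (h1 : Q.tgt b = Q.tgt c) (h2 : st.τ b = st.τ c) : b = c := by
  by_contra hne
  have := st.τ_tgt b hb c hc hne h1
  have := st.τ_pm c hc
  omega

lemma src_inj (st : SigmaTau Q) {b c : ℕ} (hb : b ∈ Q.A) (hc : c ∈ Q.A)
    (h1 : Q.src b = Q.src c) (h2 : st.σ b = st.σ c) : b = c := by
  by_contra hne
  have := st.σ_src b hb c hc hne h1
  have := st.σ_pm c hc
  omega

lemma rel_right (st : SigmaTau Q) (h : RelOK Q) {a b c : ℕ} (h1 : (a, b) ∈ Q.rel)
    (h2 : (a, c) ∈ Q.rel) : b = c := by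
  rw [rel_iff' st h] at h1 h2
  exact tgt_inj st h1.2.1 h2.2.1 (by rw [← h1.2.2.1, h2.2.2.1]) (by rw [← h1.2.2.2, h2.2.2.2])

lemma rel_left (st : SigmaTau Q) (h : RelOK Q) {a b c : ℕ} (h1 : (b, a) ∈ Q.rel)
    (h2 : (c, a) ∈ Q.rel) : b = c := by
  rw [rel_iff' st h] at h1 h2
  exact src_inj st h1.1 h2.1 (by rw [h1.2.2.1, h2.2.2.1]) (by rw [h1.2.2.2, h2.2.2.2])

/-- No arrow extends the list at the target end. -/
def HeadMax (Q : QuivRel) (l : List ℕ) : Prop := ∀ a, (a, l.head!) ∉ Q.rel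
/-- No arrow extends the list at the source end. -/
def TailMax (Q : QuivRel) (l : List ℕ) : Prop := ∀ a, (l.getLast!, a) ∉ Q.rel

lemma head_mem {l : List ℕ} (h : l ≠ []) : l.head! ∈ l := by
  cases l with
  | nil => exact absurd rfl h
  | cons a t => simp

lemma last_mem {l : List ℕ} (h : l ≠ []) : l.getLast! ∈ l := by
  have : l.getLast! = l.getLast h := List.getLast!_of_getLast? (List.getLast?_eq_some_getLast h)
  rw [this]; exact List.getLast_mem h

lemma inN_arrows (h : RelOK Q) (l : List ℕ) :
    InN Q st (.arrows l) ↔ IsAntiList Q l ∧ HeadMax Q l ∧ TailMax Q l := by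
  unfold InN
  simp only [IsAntiThread, Thread.target, Thread.source, Thread.tauAnti, Thread.sigma]
  refine and_congr_right fun hl => ?_
  have hh := hl.2.1 _ (head_mem hl.1)
  have ht := hl.2.1 _ (last_mem hl.1)
  refine and_congr ?_ ?_
  · simp only [HeadMax, rel_iff' st h]
    grind
  · simp only [TailMax, rel_iff' st h]
    grind

lemma chain_get {l : List ℕ} (hl : IsAntiList Q l) (i : ℕ) (hi : i + 1 < l.length) :
    (l[i], l[i+1]) ∈ Q.rel := by
  have := hl.2.2
  unfold List.Chain' at this
  exact List.isChain_iff_getElem.1 this i hi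

lemma head_eq {l : List ℕ} (hi : 0 < l.length) : l.head! = l[0] := by
  cases l with
  | nil => simp at hi
  | cons a t => simp

lemma last_eq {l : List ℕ} (hi : 0 < l.length) : l.getLast! = l[l.length - 1] := by
  have h : l ≠ [] := by rintro rfl; simp at hi
  have : l.getLast! = l.getLast h := List.getLast!_of_getLast? (List.getLast?_eq_some_getLast h)
  rw [this, List.getLast_eq_getElem]

lemma key (st : SigmaTau Q) (h : RelOK Q) {l l' : List ℕ} (hl : IsAntiList Q l)
    (hl' : IsAntiList Q l') (hm : HeadMax Q l) (hm' : HeadMax Q l') :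
    ∀ i j (hi : i < l.length) (hj : j < l'.length), l[i] = l'[j] →
      i = j ∧ l.head! = l'.head! := by
  intro i
  induction i with
  | zero =>
    intro j hi hj e
    cases j with
    | zero => exact ⟨rfl, by rw [head_eq hi, head_eq hj, e]⟩
    | succ j =>
      exfalso
      have := chain_get hl' j hj
      rw [← e, ← head_eq hi] at this
      exact hm _ this
  | succ i ih =>
    intro j hi hj e
    cases j with
    | zero =>
      exfalso
      have := chain_get hl i hi
      rw [e, ← head_eq hj] at this
      exact hm' _ this
    | succ j =>
      have h1 := chain_get hl i hi
      have h2 := chain_get hl' j hj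
      rw [← e] at h2
      have := ih j (by omega) (by omega) (rel_left st h h1 h2)
      exact ⟨by omega, this.2⟩

lemma anti_nodup (st : SigmaTau Q) (h : RelOK Q) {l : List ℕ} (hl : IsAntiList Q l)
    (hm : HeadMax Q l) : l.Nodup := by
  rw [List.nodup_iff_injective_getElem]
  intro i j e
  exact Fin.ext (key st h hl hl hm hm i j i.2 j.2 e).1

lemma key_mem (st : SigmaTau Q) (h : RelOK Q) {l l' : List ℕ} (hl : IsAntiList Q l)
    (hl' : IsAntiList Q l') (hm : HeadMax Q l) (hm' : HeadMax Q l') {a : ℕ} (ha : a ∈ l)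
    (ha' : a ∈ l') : l.head! = l'.head! := by
  obtain ⟨i, hi, rfl⟩ := List.mem_iff_getElem.1 ha
  obtain ⟨j, hj, e⟩ := List.mem_iff_getElem.1 ha'
  exact (key st h hl hl' hm hm' i j hi hj e.symm).2

lemma get_eq_of_head (st : SigmaTau Q) (h : RelOK Q) {l l' : List ℕ} (hl : IsAntiList Q l)
    (hl' : IsAntiList Q l') (e : l.head! = l'.head!) :
    ∀ i (hi : i < l.length) (hj : i < l'.length), l[i] = l'[i] := by
  intro i
  induction i with
  | zero => intro hi hj; rw [← head_eq hi, ← head_eq hj, e]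
  | succ i ih =>
    intro hi hj
    have h1 := chain_get hl i hi
    have h2 := chain_get hl' i hj
    rw [← ih (by omega) (by omega)] at h2
    exact rel_right st h h1 h2

lemma len_le_of_head (st : SigmaTau Q) (h : RelOK Q) {l l' : List ℕ} (hl : IsAntiList Q l)
    (hl' : IsAntiList Q l') (e : l.head! = l'.head!) (hm : TailMax Q l) :
    l'.length ≤ l.length := by
  by_contra hlt
  push Not at hlt
  have hpos : 0 < l.length := List.length_pos_iff.2 hl.1
  have h2 := chain_get hl' (l.length - 1) (by omega)
  rw [← get_eq_of_head st h hl hl' e (l.length - 1) (by omega) (by omega), ← last_eq hpos] at h2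
  exact hm _ h2

lemma eq_of_head (st : SigmaTau Q) (h : RelOK Q) {l l' : List ℕ} (hl : IsAntiList Q l)
    (hl' : IsAntiList Q l') (e : l.head! = l'.head!) (hm : TailMax Q l) (hm' : TailMax Q l') :
    l = l' := by
  have h1 := len_le_of_head st h hl hl' e hm
  have h2 := len_le_of_head st h hl' hl e.symm hm'
  exact List.ext_getElem (by omega) fun i hi hj => get_eq_of_head st h hl hl' e i hi hj

lemma anti_len (st : SigmaTau Q) (h : RelOK Q) {l : List ℕ} (hl : IsAntiList Q l)
    (hm : HeadMax Q l) : l.length ≤ Q.A.card := by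
  rw [← List.toFinset_card_of_nodup (anti_nodup st h hl hm)]
  apply Finset.card_le_card
  intro a ha
  exact hl.2.1 a (by simpa using ha)

lemma exists_max (st : SigmaTau Q) (h : RelOK Q) {a : ℕ} (ha : a ∈ Q.A)
    (hm : ∀ b, (b, a) ∉ Q.rel) :
    ∃ l, IsAntiList Q l ∧ l.head! = a ∧ TailMax Q l := by
  by_contra hcon
  push Not at hcon
  have step : ∀ n, ∃ l, IsAntiList Q l ∧ l.head! = a ∧ l.length = n + 1 := by
    intro n
    induction n with
    | zero =>
      refine ⟨[a], ⟨by simp, by simpa using ha, ?_⟩, by simp, by simp⟩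
      unfold List.Chain'
      simp
    | succ n ih =>
      obtain ⟨l, hl, e, hn⟩ := ih
      have := hcon l hl e
      unfold TailMax at this
      push Not at this
      obtain ⟨b, hb⟩ := this
      refine ⟨l ++ [b], ⟨by simp, ?_, ?_⟩, ?_, by simp [hn]⟩
      · intro c hc
        rcases List.mem_append.1 hc with hc | hc
        · exact hl.2.1 c hc
        · simp only [List.mem_singleton] at hc
          subst hc
          exact (h _ hb).2.1
      · unfold List.Chain'
        rw [List.isChain_append]
        refine ⟨hl.2.2, by simp, ?_⟩
        intro x hx y hy
        have hx' := List.getLast!_of_getLast? hx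
        simp at hy
        subst hy
        rw [hx'] at hb
        exact hb
      · rw [← e]
        cases l with
        | nil => simp at hn
        | cons a t => simp
  obtain ⟨l, hl, e, hn⟩ := step Q.A.card
  have := anti_len st h hl (by unfold HeadMax; rw [e]; exact hm)
  omega

/-- Endpoint of a thread, as a signed vertex. -/
def tp (st : SigmaTau Q) (w : Thread) : ℕ × ℤ := (w.target Q, w.tauAnti st)

/-- Signed vertices. -/
def SV (Q : QuivRel) : Finset (ℕ × ℤ) := Q.V ×ˢ {1, -1}

/-- Signed starts of arrows. -/
def SA (st : SigmaTau Q) : Finset (ℕ × ℤ) := Q.A.image fun a => (Q.src a, st.σ a)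

lemma SA_card (st : SigmaTau Q) : (SA st).card = Q.A.card := by
  apply Finset.card_image_of_injOn
  intro a ha b hb e
  simp only [Prod.mk.injEq] at e
  exact src_inj st ha hb e.1 e.2

lemma SV_card : (SV Q).card = 2 * Q.V.card := by
  unfold SV
  rw [Finset.card_product]
  have : ({1, -1} : Finset ℤ).card = 2 := by decide
  rw [this, mul_comm]

/-- Arrows have their ends among the vertices. -/
def EndsOK (Q : QuivRel) : Prop := ∀ a ∈ Q.A, Q.src a ∈ Q.V ∧ Q.tgt a ∈ Q.V

lemma SA_sub (he : EndsOK Q) : SA st ⊆ SV Q := by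
  intro x hx
  simp only [SA, Finset.mem_image] at hx
  obtain ⟨a, ha, rfl⟩ := hx
  simp only [SV, Finset.mem_product, Finset.mem_insert, Finset.mem_singleton]
  exact ⟨(he a ha).1, st.σ_pm a ha⟩

lemma tp_maps (he : EndsOK Q) {w : Thread} (hw : InN Q st w) :
    tp st w ∈ SV Q \ SA st := by
  rw [Finset.mem_sdiff]
  constructor
  · simp only [SV, Finset.mem_product, Finset.mem_insert, Finset.mem_singleton, tp]
    cases w with
    | triv x ε => exact hw.1
    | arrows l =>
      have hh := hw.1.2.1 _ (head_mem hw.1.1)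
      exact ⟨(he _ hh).2, st.τ_pm _ hh⟩
  · intro hx
    simp only [SA, Finset.mem_image, tp, Prod.mk.injEq] at hx
    obtain ⟨a, ha, e1, e2⟩ := hx
    exact hw.2.1 ⟨a, ha, e1, e2⟩

lemma tp_inj (h : RelOK Q) {w w' : Thread} (hw : InN Q st w) (hw' : InN Q st w')
    (e : tp st w = tp st w') : w = w' := by
  simp only [tp, Prod.mk.injEq] at e
  cases w with
  | triv x ε =>
    cases w' with
    | triv x' ε' => simpa [Thread.target, Thread.tauAnti] using e
    | arrows l =>
      exfalso
      have hh := hw'.1.2.1 _ (head_mem hw'.1.1)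
      exact hw.2.2 ⟨_, hh, e.1.symm, e.2.symm⟩
  | arrows l =>
    have hh := hw.1.2.1 _ (head_mem hw.1.1)
    cases w' with
    | triv x' ε' =>
      exfalso
      exact hw'.2.2 ⟨_, hh, e.1, e.2⟩
    | arrows l' =>
      have hh' := hw'.1.2.1 _ (head_mem hw'.1.1)
      have := tgt_inj st hh hh' e.1 e.2
      rw [inN_arrows h] at hw hw'
      rw [eq_of_head st h hw.1 hw'.1 this hw.2.2 hw'.2.2]

lemma inN_of_top (h : RelOK Q) {a : ℕ} (ha : a ∈ Q.A) (hm : ∀ b, (b, a) ∉ Q.rel) :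
    ∃ l, InN Q st (.arrows l) ∧ l.head! = a := by
  obtain ⟨l, hl, e, ht⟩ := exists_max st h ha hm
  refine ⟨l, ?_, e⟩
  rw [inN_arrows h]
  exact ⟨hl, by unfold HeadMax; rw [e]; exact hm, ht⟩

lemma tp_surj (h : RelOK Q) {x : ℕ × ℤ} (hx : x ∈ SV Q \ SA st) :
    ∃ w, InN Q st w ∧ tp st w = x := by
  obtain ⟨v, ε⟩ := x
  simp only [SV, SA, Finset.mem_sdiff, Finset.mem_product, Finset.mem_insert,
    Finset.mem_singleton, Finset.mem_image, Prod.mk.injEq, not_exists, not_and] at hx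
  by_cases hb : ∃ b ∈ Q.A, Q.tgt b = v ∧ st.τ b = ε
  · obtain ⟨b, hb, rfl, rfl⟩ := hb
    obtain ⟨l, hl, e⟩ := inN_of_top (st := st) h hb (by
      intro a hab
      rw [rel_iff' st h] at hab
      exact hx.2 a hab.1 hab.2.2.1 hab.2.2.2)
    refine ⟨_, hl, ?_⟩
    simp only [tp, Thread.target, Thread.tauAnti, e]
  · refine ⟨.triv v ε, ⟨hx.1, ?_, hb⟩, rfl⟩
    rintro ⟨a, ha, e1, e2⟩
    exact hx.2 a ha e1 e2

lemma N_finite (h : RelOK Q) (he : EndsOK Q) : {w | InN Q st w}.Finite := by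
  apply Set.Finite.of_finite_image (f := tp st)
  · apply (SV Q \ SA st).finite_toSet.subset
    rintro _ ⟨w, hw, rfl⟩
    exact tp_maps he hw
  · intro w hw w' hw' e
    exact tp_inj h hw hw' e

lemma N_card (h : RelOK Q) (he : EndsOK Q) :
    {w | InN Q st w}.ncard + Q.A.card = 2 * Q.V.card := by
  have : {w | InN Q st w}.ncard = (SV Q \ SA st).card := by
    rw [← Set.ncard_coe_finset]
    apply Set.ncard_congr (fun w _ => tp st w)
    · intro w hw; exact tp_maps he hw
    · intro w w' hw hw' e; exact tp_inj h hw hw' e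
    · intro x hx
      obtain ⟨w, hw, e⟩ := tp_surj h hx
      exact ⟨w, hw, e⟩
  rw [this, Finset.card_sdiff_of_subset (SA_sub he), SA_card, SV_card]
  have := Finset.card_le_card (SA_sub (st := st) he)
  rw [SA_card, SV_card] at this
  omega

/-- The set of arrows of a thread. -/
def arr : Thread → Finset ℕ
  | .triv _ _ => ∅
  | .arrows l => l.toFinset

open Classical in
/-- The class `𝒞` as a finset. -/
noncomputable def CF (st : SigmaTau Q) : Finset ℕ := Q.A.filter fun a => InC Q st a

lemma mem_CF {a : ℕ} : a ∈ CF st ↔ InC Q st a := by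
  simp only [CF, Finset.mem_filter]
  exact ⟨fun h => h.2, fun h => ⟨h.1, h⟩⟩

lemma len_sum (h : RelOK Q) (he : EndsOK Q) :
    qN {w | InN Q st w} + (CF st).card = Q.A.card := by
  have hfin := N_finite (st := st) h he
  have h1 : qN {w | InN Q st w} = ∑ w ∈ hfin.toFinset, (arr w).card := by
    unfold qN
    rw [finsum_mem_eq_finite_toFinset_sum _ hfin]
    apply Finset.sum_congr rfl
    intro w hw
    have hw : InN Q st w := by simpa using hw
    cases w with
    | triv => rfl
    | arrows l =>
      rw [inN_arrows h] at hw
      exact (List.toFinset_card_of_nodup (anti_nodup st h hw.1 hw.2.1)).symm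
  have h2 : hfin.toFinset.biUnion arr = Q.A \ CF st := by
    ext a
    simp only [Finset.mem_biUnion, Finset.mem_sdiff, mem_CF, Set.Finite.mem_toFinset,
      Set.mem_setOf_eq, InC, not_and, not_not]
    constructor
    · rintro ⟨w, hw, haw⟩
      cases w with
      | triv => simp [arr] at haw
      | arrows l =>
        have haw : a ∈ l := by simpa [arr] using haw
        exact ⟨hw.1.2.1 a haw, fun _ => ⟨l, hw, haw⟩⟩
    · rintro ⟨ha, hl⟩
      obtain ⟨l, hl, hal⟩ := hl ha
      exact ⟨_, hl, by simpa [arr] using hal⟩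
  rw [h1, ← Finset.card_biUnion, h2]
  · apply Finset.card_sdiff_add_card_eq_card
    intro a ha
    exact (mem_CF.1 ha).1
  · intro w hw w' hw' hne
    change Disjoint (arr w) (arr w')
    rw [Finset.disjoint_left]
    intro a ha ha'
    apply hne
    have hw : InN Q st w := by simpa using hw
    have hw' : InN Q st w' := by simpa using hw'
    cases w with
    | triv => simp [arr] at ha
    | arrows l =>
      cases w' with
      | triv => simp [arr] at ha'
      | arrows l' =>
        have ha : a ∈ l := by simpa [arr] using ha
        have ha' : a ∈ l' := by simpa [arr] using ha'
        rw [inN_arrows h] at hw hw'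
        rw [eq_of_head st h hw.1 hw'.1
          (key_mem st h hw.1 hw'.1 hw.2.1 hw'.2.1 ha ha') hw.2.2 hw'.2.2]

lemma psi_rel (h : RelOK Q) {a b : ℕ} :
    PsiRel Q st a b ↔ InC Q st a ∧ InC Q st b ∧ (a, b) ∈ Q.rel := by
  rw [rel_iff' st h]
  unfold PsiRel
  constructor
  · rintro ⟨ha, hb, e1, e2⟩
    exact ⟨ha, hb, ha.1, hb.1, e1.symm, e2.symm⟩
  · rintro ⟨ha, hb, -, -, e1, e2⟩
    exact ⟨ha, hb, e1.symm, e2.symm⟩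

lemma psi_pre (h : RelOK Q) {b : ℕ} (hb : InC Q st b) : ∃ a, PsiRel Q st a b := by
  have : ∃ a, (a, b) ∈ Q.rel := by
    by_contra hcon
    push Not at hcon
    obtain ⟨l, hl, e⟩ := inN_of_top (st := st) h hb.1 hcon
    exact hb.2 ⟨l, hl, e ▸ head_mem hl.1.1⟩
  obtain ⟨a, hab⟩ := this
  refine ⟨a, (psi_rel h).2 ⟨⟨(h _ hab).1, ?_⟩, hb, hab⟩⟩
  rintro ⟨l, hl, hal⟩
  have hl' := (inN_arrows h l).1 hl
  obtain ⟨i, hi, e⟩ := List.mem_iff_getElem.1 hal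
  by_cases hi' : i + 1 < l.length
  · have := chain_get hl'.1 i hi'
    rw [e] at this
    have := rel_right st h hab this
    exact hb.2 ⟨l, hl, this ▸ List.getElem_mem _⟩
  · have : l.getLast! = a := by
      rw [last_eq (by omega), ← e]
      congr 1
      omega
    exact hl'.2.2 b (this ▸ hab)

lemma psi_left (h : RelOK Q) {a b c : ℕ} (h1 : PsiRel Q st b a) (h2 : PsiRel Q st c a) :
    b = c :=
  rel_left st h ((psi_rel h).1 h1).2.2 ((psi_rel h).1 h2).2.2

lemma psi_right (h : RelOK Q) {a b c : ℕ} (h1 : PsiRel Q st a b) (h2 : PsiRel Q st a c) :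
    b = c :=
  rel_right st h ((psi_rel h).1 h1).2.2 ((psi_rel h).1 h2).2.2

/-- `Ψ` as a function on `𝒞`. -/
lemma exists_psi (h : RelOK Q) :
    ∃ ψ : ℕ → ℕ, (∀ a, InC Q st a → PsiRel Q st a (ψ a)) ∧
      ∀ b, InC Q st b → ∃ a, InC Q st a ∧ ψ a = b := by
  have hpre : ∀ b, ∃ a, InC Q st b → PsiRel Q st a b := by
    intro b
    by_cases hb : InC Q st b
    · obtain ⟨a, ha⟩ := psi_pre h hb
      exact ⟨a, fun _ => ha⟩
    · exact ⟨0, fun h => absurd h hb⟩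
  choose π hπ using hpre
  have hinj : Set.InjOn π (CF st) := by
    intro a ha b hb e
    have h1 := hπ a (mem_CF.1 ha)
    have h2 := hπ b (mem_CF.1 hb)
    rw [← e] at h2
    exact psi_right h h1 h2
  have hmaps : Set.MapsTo π (CF st) (CF st) := fun a ha =>
    mem_CF.2 (hπ a (mem_CF.1 ha)).1
  have hsurj : Set.SurjOn π (CF st) (CF st) :=
    Finset.surjOn_of_injOn_of_card_le π hmaps hinj le_rfl
  have hpost : ∀ a, ∃ b, InC Q st a → PsiRel Q st a b := by
    intro a
    by_cases ha : InC Q st a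
    · obtain ⟨b, hb, e⟩ := hsurj (mem_CF.2 ha)
      exact ⟨b, fun _ => e ▸ hπ b (mem_CF.1 hb)⟩
    · exact ⟨0, fun h => absurd h ha⟩
  choose ψ hψ using hpost
  refine ⟨ψ, hψ, fun b hb => ⟨π b, (hπ b hb).1, ?_⟩⟩
  exact psi_right h (hψ _ (hπ b hb).1) (hπ b hb)


lemma eqv_closed {α : Type*} {r : α → α → Prop} {S : Set α}
    (hS : ∀ x y, r x y → (x ∈ S ↔ y ∈ S)) {a b : α} (hab : Relation.EqvGen r a b) :
    a ∈ S ↔ b ∈ S := by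
  induction hab with
  | rel x y h => exact hS x y h
  | refl x => rfl
  | symm x y _ ih => exact ih.symm
  | trans x y z _ _ ih1 ih2 => exact ih1.trans ih2

/-- The `Ψ`-orbit of an arrow. -/
def orb (st : SigmaTau Q) (a : ℕ) : Set ℕ := {b | Relation.EqvGen (PsiRel Q st) a b}

lemma self_mem_orb (a : ℕ) : a ∈ orb st a := Relation.EqvGen.refl a

lemma orb_eq {a b : ℕ} (h : b ∈ orb st a) : orb st a = orb st b := by
  ext c
  exact ⟨fun hc => .trans _ _ _ (.symm _ _ h) hc, fun hc => .trans _ _ _ h hc⟩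

lemma orb_sub {a b : ℕ} (ha : InC Q st a) (h : b ∈ orb st a) : InC Q st b :=
  (eqv_closed (S := {x | InC Q st x}) (fun _ _ h => ⟨fun _ => h.2.1, fun _ => h.1⟩) h).1 ha

lemma orb_finite {a : ℕ} (ha : InC Q st a) : (orb st a).Finite :=
  Q.A.finite_toSet.subset fun _ hb => (orb_sub ha hb).1

lemma triangle (h : RelOK Q) {ψ : ℕ → ℕ} (hψ : ∀ a, InC Q st a → PsiRel Q st a (ψ a))
    {a : ℕ} (ha : InC Q st a) (h3 : (orb st a).ncard = 3) :
    Is3Cycle Q a (ψ a) (ψ (ψ a)) := by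
  have p1 := hψ a ha
  have p2 := hψ _ p1.2.1
  have p3 := hψ _ p2.2.1
  set b := ψ a
  set c := ψ b
  set d := ψ c
  have hab : a ≠ b := by
    intro e
    have hsub : orb st a ⊆ {a} := by
      intro x hx
      refine (eqv_closed (S := {a}) ?_ hx).1 rfl
      intro x y hxy
      simp only [Set.mem_singleton_iff]
      constructor
      · rintro rfl
        exact (psi_right h hxy p1).trans e.symm
      · rintro rfl
        refine psi_left h hxy (by rw [← e] at p1; exact p1)
    have := Set.ncard_le_ncard hsub
    rw [h3, Set.ncard_singleton] at this
    omega
  have hbc : b ≠ c := by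
    intro e
    rw [← e] at p2
    exact hab (psi_left h p1 p2)
  have hac : a ≠ c := by
    intro e
    have hsub : orb st a ⊆ {a, b} := by
      intro x hx
      refine (eqv_closed (S := {a, b}) ?_ hx).1 (by simp)
      rw [← e] at p2
      intro x y hxy
      simp only [Set.mem_insert_iff, Set.mem_singleton_iff]
      constructor
      · rintro (rfl | rfl)
        · exact .inr (psi_right h hxy p1)
        · exact .inl (psi_right h hxy p2)
      · rintro (rfl | rfl)
        · exact .inr (psi_left h hxy p2)
        · exact .inl (psi_left h hxy p1)
    have := Set.ncard_le_ncard hsub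
    rw [h3, Set.ncard_pair hab] at this
    omega
  have mb : b ∈ orb st a := .rel _ _ p1
  have mc : c ∈ orb st a := .trans _ _ _ mb (.rel _ _ p2)
  have md : d ∈ orb st a := .trans _ _ _ mc (.rel _ _ p3)
  have hsub : ({a, b, c} : Set ℕ) ⊆ orb st a := by
    rintro x (rfl | rfl | rfl)
    · exact self_mem_orb _
    · exact mb
    · exact mc
  have hcard : ({a, b, c} : Set ℕ).ncard = 3 := Set.ncard_eq_three.2 ⟨a, b, c, hab, hac, hbc, rfl⟩
  have heq := Set.eq_of_subset_of_ncard_le hsub (by omega) (orb_finite ha)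
  rw [← heq] at md
  have hd : d = a := by
    rcases md with e | e | e
    · exact e
    · rw [e] at p3
      exact absurd (psi_left h p1 p3) hac
    · rw [Set.mem_singleton_iff.1 e] at p3
      exact absurd (psi_left h p2 p3) hbc
  rw [hd] at p3
  exact ⟨ha.1, p1.2.1.1, p2.2.1.1, hab, hbc, hac, p1.2.2.1.symm, p2.2.2.1.symm, p3.2.2.1.symm⟩

/-- Boundary of an arrow. -/
def bd (he : EndsOK Q) (a : Q.A) : Q.V → ℚ :=
  Pi.single ⟨Q.tgt a, (he a a.2).2⟩ 1 - Pi.single ⟨Q.src a, (he a a.2).1⟩ 1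

/-- Boundary map. -/
noncomputable def bdL (he : EndsOK Q) : (Q.A → ℚ) →ₗ[ℚ] (Q.V → ℚ) :=
  Fintype.linearCombination ℚ (bd he)

lemma bdL_apply (he : EndsOK Q) (g : Q.A → ℚ) (x : Q.V) :
    bdL he g x = ∑ a : Q.A, g a * ((if Q.tgt a = x then 1 else 0) -
      (if Q.src a = x then 1 else 0)) := by
  simp only [bdL, Fintype.linearCombination_apply, Finset.sum_apply, Pi.smul_apply, smul_eq_mul,
    bd, Pi.sub_apply, Pi.single_apply]
  apply Finset.sum_congr rfl
  intro a _
  congr 2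
  · simp [Subtype.ext_iff, eq_comm]
  · simp [Subtype.ext_iff, eq_comm]

lemma rank_bd (he : EndsOK Q) (hne : Q.V.Nonempty) (hc : Connected Q) :
    Q.V.card ≤ Module.finrank ℚ (LinearMap.range (bdL he)) + 1 := by
  obtain ⟨x0, hx0⟩ := hne
  set M := LinearMap.range (bdL he) ⊔ Submodule.span ℚ {(Pi.single ⟨x0, hx0⟩ 1 : Q.V → ℚ)} with hM
  have hbd : ∀ a : Q.A, bd he a ∈ M := by
    intro a
    apply Submodule.mem_sup_left
    refine ⟨Pi.single a 1, ?_⟩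
    simp [bdL]
  have hall : ∀ y, Relation.ReflTransGen (Adj Q) x0 y → ∀ hy : y ∈ Q.V,
      (Pi.single ⟨y, hy⟩ 1 : Q.V → ℚ) ∈ M := by
    intro y hy
    induction hy with
    | refl =>
      intro hy
      exact Submodule.mem_sup_right (Submodule.mem_span_singleton_self _)
    | tail _ hadj ih =>
      intro hy
      obtain ⟨a, ha, ⟨rfl, rfl⟩ | ⟨rfl, rfl⟩⟩ := hadj
      · have h1 := M.add_mem (hbd ⟨a, ha⟩) (ih (he a ha).1)
        simpa [bd] using h1
      · have h1 := M.sub_mem (ih (he a ha).2) (hbd ⟨a, ha⟩)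
        simpa [bd] using h1
  have htop : M = ⊤ := by
    rw [eq_top_iff]
    intro f _
    rw [pi_eq_sum_univ' f]
    apply Submodule.sum_mem
    intro i _
    apply Submodule.smul_mem
    have := hall i (hc x0 hx0 i i.2) i.2
    convert this using 1
  have h1 : Module.finrank ℚ M = Q.V.card := by
    rw [htop, finrank_top]
    simp
  have h2 := Submodule.finrank_add_le_finrank_add_finrank (LinearMap.range (bdL he))
    (Submodule.span ℚ {(Pi.single ⟨x0, hx0⟩ 1 : Q.V → ℚ)})
  have h3 : Module.finrank ℚ (Submodule.span ℚ {(Pi.single ⟨x0, hx0⟩ 1 : Q.V → ℚ)}) ≤ 1 := by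
    have := finrank_span_le_card (R := ℚ) ({(Pi.single ⟨x0, hx0⟩ 1 : Q.V → ℚ)} : Set (Q.V → ℚ))
    simpa using this
  rw [← hM, h1] at h2
  omega

open Classical in
/-- Functions on orbits of `𝒞`, as functions on arrows. -/
noncomputable def orbL (st : SigmaTau Q) :
    ({O : Set ℕ // COrbit Q st O} → ℚ) →ₗ[ℚ] (Q.A → ℚ) where
  toFun f a := if h : InC Q st a then f ⟨orb st a, a, h, rfl⟩ else 0
  map_add' f g := by
    ext a
    by_cases h : InC Q st a <;> simp [h]
  map_smul' c f := by
    ext a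
    by_cases h : InC Q st a <;> simp [h]

lemma orbL_inj : Function.Injective (orbL st) := by
  intro f g e
  ext ⟨O, a, ha, rfl⟩
  have := congrFun e ⟨a, ha.1⟩
  simp only [orbL, LinearMap.coe_mk, AddHom.coe_mk, ha, dif_pos] at this
  exact this

lemma orbL_ker (h : RelOK Q) (he : EndsOK Q) :
    LinearMap.range (orbL st) ≤ LinearMap.ker (bdL he) := by
  rintro _ ⟨f, rfl⟩
  obtain ⟨ψ, hψ, hs⟩ := exists_psi (st := st) h
  rw [LinearMap.mem_ker]
  ext x
  rw [bdL_apply]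
  classical
  set F : ℕ → ℚ := fun a => if h : InC Q st a then f ⟨orb st a, a, h, rfl⟩ else 0 with hF
  have hsum : ∀ g : ℕ → ℚ, ∑ a : Q.A, orbL st f a * g a = ∑ a ∈ CF st, F a * g a := by
    intro g
    have : ∑ a : Q.A, orbL st f a * g a = ∑ a ∈ Q.A, F a * g a := by
      rw [← Finset.sum_coe_sort Q.A]
      rfl
    rw [this]
    symm
    apply Finset.sum_subset
    · intro a ha
      exact (mem_CF.1 ha).1
    · intro a _ ha
      rw [mem_CF] at ha
      simp [hF, ha]
  rw [hsum (fun a => (if Q.tgt a = x then 1 else 0) - (if Q.src a = x then 1 else 0))]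
  simp only [mul_sub, Finset.sum_sub_distrib]
  have : ∑ a ∈ CF st, F a * (if Q.src a = x then 1 else 0) =
      ∑ a ∈ CF st, F a * (if Q.tgt a = x then 1 else 0) := by
    apply Finset.sum_nbij ψ
    · intro a ha
      exact mem_CF.2 (hψ a (mem_CF.1 ha)).2.1
    · intro a ha b hb e
      have h1 := hψ a (mem_CF.1 ha)
      have h2 := hψ b (mem_CF.1 hb)
      rw [← e] at h2
      exact psi_left h h1 h2
    · intro b hb
      obtain ⟨a, ha, e⟩ := hs b (mem_CF.1 hb)
      exact ⟨a, mem_CF.2 ha, e⟩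
    · intro a ha
      have h1 := hψ a (mem_CF.1 ha)
      have h2 : orb st a = orb st (ψ a) := orb_eq (.rel _ _ h1)
      have : F a = F (ψ a) := by
        simp only [hF, h1.1, h1.2.1, dif_pos, h2]
      rw [this, h1.2.2.1]
  rw [this, sub_self]
  rfl

lemma orb_fin : Finite {O : Set ℕ // COrbit Q st O} := by
  have : {O : Set ℕ | COrbit Q st O}.Finite := by
    apply (Q.A.finite_toSet.powerset).subset
    rintro _ ⟨a, ha, rfl⟩ b hb
    exact (orb_sub ha hb).1
  exact this

/-- If the number of `𝒞`-orbits is at least the Betti number, then every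
one-cycle is constant on the orbits and vanishes outside `𝒞`. -/
lemma ker_le (h : RelOK Q) (he : EndsOK Q) (hne : Q.V.Nonempty) (hc : Connected Q)
    (hcard : Q.A.card + 1 ≤ Q.V.card + {O : Set ℕ | COrbit Q st O}.ncard) :
    LinearMap.ker (bdL he) ≤ LinearMap.range (orbL st) := by
  have := orb_fin (st := st)
  have := Fintype.ofFinite {O : Set ℕ // COrbit Q st O}
  have h1 := rank_bd he hne hc
  have h2 := LinearMap.finrank_range_add_finrank_ker (bdL he)
  have h3 := LinearMap.finrank_range_of_inj (orbL_inj (st := st))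
  rw [Module.finrank_fintype_fun_eq_card] at h2 h3
  rw [Fintype.card_coe] at h2
  have h4 : Fintype.card {O : Set ℕ // COrbit Q st O} = {O : Set ℕ | COrbit Q st O}.ncard := by
    rw [← Nat.card_eq_fintype_card]
    rfl
  exact (Submodule.eq_of_le_of_finrank_le (orbL_ker h he) (by omega)).ge

lemma cycle_in (h : RelOK Q) (he : EndsOK Q) (hne : Q.V.Nonempty) (hc : Connected Q)
    (hcard : Q.A.card + 1 ≤ Q.V.card + {O : Set ℕ | COrbit Q st O}.ncard)
    {ψ : ℕ → ℕ} (hψ : ∀ a, InC Q st a → PsiRel Q st a (ψ a))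
    (h3 : ∀ a, InC Q st a → (orb st a).ncard = 3)
    {a b c : ℕ} (hcyc : Is3Cycle Q a b c) : InC Q st a ∧ b = ψ a ∧ c = ψ (ψ a) := by
  classical
  set z : Q.A → ℚ := fun x => if x.1 = a ∨ x.1 = b ∨ x.1 = c then 1 else 0 with hz
  obtain ⟨ha, hb, hc', hab, hbc, hac, e1, e2, e3⟩ := hcyc
  have hker : z ∈ LinearMap.ker (bdL he) := by
    rw [LinearMap.mem_ker]
    ext x
    rw [bdL_apply]
    have hs : ∀ g : ℕ → ℚ, ∑ y : Q.A, z y * g y = g a + g b + g c := by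
      intro g
      have h1 : ∑ y : Q.A, z y * g y =
          ∑ y ∈ Q.A, (if y = a ∨ y = b ∨ y = c then 1 else 0) * g y := by
        rw [← Finset.sum_coe_sort Q.A]
      rw [h1]
      have h2 : ∑ y ∈ Q.A, (if y = a ∨ y = b ∨ y = c then 1 else 0) * g y =
          ∑ y ∈ ({a, b, c} : Finset ℕ), g y := by
        symm
        rw [← Finset.sum_filter_add_sum_filter_not Q.A (fun y => y = a ∨ y = b ∨ y = c)]
        rw [Finset.sum_eq_zero (s := Q.A.filter fun y => ¬ (y = a ∨ y = b ∨ y = c)), add_zero]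
        · apply Finset.sum_congr
          · ext y
            simp only [Finset.mem_insert, Finset.mem_singleton, Finset.mem_filter]
            constructor
            · rintro (rfl | rfl | rfl) <;> simp [*]
            · exact fun h => h.2
          · intro y hy
            rw [if_pos (Finset.mem_filter.1 hy).2, one_mul]
        · intro y hy
          rw [if_neg (Finset.mem_filter.1 hy).2, zero_mul]
      rw [h2, Finset.sum_insert (by simp [hab, hac]), Finset.sum_insert (by simp [hbc]),
        Finset.sum_singleton, add_assoc]
    rw [hs (fun a => (if Q.tgt a = x then 1 else 0) - (if Q.src a = x then 1 else 0))]
    simp only [e1, e2, e3, Pi.zero_apply]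
    ring
  obtain ⟨f, hf⟩ := ker_le h he hne hc hcard hker
  have hval : ∀ y (hy : y ∈ Q.A), z ⟨y, hy⟩ = if h : InC Q st y then
      f ⟨orb st y, y, h, rfl⟩ else 0 := by
    intro y hy
    rw [← hf]
    rfl
  have hCa : InC Q st a := by
    by_contra hn
    have := hval a ha
    simp [hz, hn] at this
  have hstep : ∀ y, InC Q st y → (y = a ∨ y = b ∨ y = c) →
      (ψ y = a ∨ ψ y = b ∨ ψ y = c) := by
    intro y hy hyy
    have hp := hψ y hy
    have h1 := hval y hy.1
    have h2 := hval (ψ y) hp.2.1.1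
    have h4 : orb st y = orb st (ψ y) := orb_eq (.rel _ _ hp)
    by_contra hn
    simp only [hz, hyy, hn, hy, hp.2.1, dif_pos, if_true, if_false, h4] at h1 h2
    rw [← h2] at h1
    exact one_ne_zero h1
  have ht := triangle h hψ hCa (h3 a hCa)
  obtain ⟨-, -, -, t1, t2, t3, s1, s2, s3⟩ := ht
  have hp1 := hψ a hCa
  have m1 := hstep a hCa (.inl rfl)
  have m2 := hstep (ψ a) hp1.2.1 m1
  refine ⟨hCa, ?_⟩
  rcases m1 with m1 | m1 | m1
  · exact absurd m1.symm t1
  · refine ⟨m1.symm, ?_⟩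
    rcases m2 with m2 | m2 | m2
    · exact absurd m2.symm t3
    · exact absurd (m1.trans m2.symm) t2
    · exact m2.symm
  · exfalso
    rcases m2 with m2 | m2 | m2
    · exact absurd m2.symm t3
    · rw [m2, m1] at s2
      rw [m1] at s1
      rw [m2] at s3
      have q1 := st.σ_src a ha b hb hab (by omega)
      have q2 := st.σ_src b hb c hc' hbc (by omega)
      have q3 := st.σ_src a ha c hc' hac (by omega)
      have := st.σ_pm a ha
      omega
    · exact absurd (m1.trans m2.symm) t2


/-- The `Φ`-orbit of a maximal antipath. -/
def norb (st : SigmaTau Q) (w : Thread) : Set Thread := {w' | Relation.EqvGen (PhiRel Q st) w w'}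

lemma norb_sub {w w' : Thread} (hw : InN Q st w) (h : w' ∈ norb st w) : InN Q st w' :=
  (eqv_closed (S := {x | InN Q st x}) (fun _ _ h => ⟨fun _ => h.2.1, fun _ => h.1⟩) h).1 hw

lemma CF_card (h3 : ∀ a, InC Q st a → (orb st a).ncard = 3) :
    (CF st).card = 3 * {O : Set ℕ | COrbit Q st O}.ncard := by
  classical
  have h1 : {O : Set ℕ | COrbit Q st O} = ((CF st).image (orb st) : Finset (Set ℕ)) := by
    ext O
    simp only [Set.mem_setOf_eq, Finset.coe_image, Set.mem_image, Finset.mem_coe, mem_CF]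
    constructor
    · rintro ⟨a, ha, rfl⟩; exact ⟨a, ha, rfl⟩
    · rintro ⟨a, ha, rfl⟩; exact ⟨a, ha, rfl⟩
  rw [h1, Set.ncard_coe_finset]
  rw [Finset.card_eq_sum_card_image (orb st) (CF st)]
  rw [Finset.sum_const_nat (m := 3), mul_comm]
  intro O hO
  obtain ⟨a, ha, rfl⟩ := Finset.mem_image.1 hO
  rw [mem_CF] at ha
  rw [← h3 a ha, ← Set.ncard_coe_finset]
  congr 1
  ext b
  simp only [Finset.coe_filter, Set.mem_setOf_eq, mem_CF]
  constructor
  · rintro ⟨_, e⟩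
    rw [← e]
    exact self_mem_orb b
  · intro hb
    exact ⟨orb_sub ha hb, (orb_eq hb).symm⟩

end Aux

/-- Let `𝚫 ∈ 𝒜` and let `m` be the number of `3`-cycles in
`Δ` counted up to cyclic permutation (each cyclic class consists of exactly
three ordered `3`-cycles).  Then
`f_𝚫 = m·[0,3] + [|Δ₀| + 1 - m, |Δ₀| - 1 - 2m]` (in particular
`2m + 1 ≤ |Δ₀|`, so the natural subtractions are honest). -/
theorem stmt18 (Q : QuivRel) (st : SigmaTau Q) (hA : ClassA Q st)
    (m : ℕ)
    (hm : m = {t : ℕ × ℕ × ℕ | Is3Cycle Q t.1 t.2.1 t.2.2}.ncard / 3) :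
    2 * m + 1 ≤ Q.V.card ∧
    ∀ x, fInv Q st x =
      m * charFn 0 3 x +
        charFn (Q.V.card + 1 - m) (Q.V.card - 1 - 2 * m) x := by
  obtain ⟨⟨hne, he, hc, h, -⟩, m0, p0, hf⟩ := hA
  have he : EndsOK Q := he
  have h : RelOK Q := h
  have hNfin := N_finite (st := st) h he
  have hpos : ∀ O, NOrbit Q st O → 0 < pN O := by
    rintro _ ⟨w, hw, rfl⟩
    exact (Set.ncard_pos (hNfin.subset fun w' hw' => norb_sub hw hw')).2 ⟨w, .refl w⟩
  have hNOfin : {O : Set Thread | NOrbit Q st O}.Finite := by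
    apply hNfin.powerset.subset
    rintro _ ⟨w, hw, rfl⟩ w' hw'
    exact norb_sub hw hw'
  have hCOfin : {O : Set ℕ | COrbit Q st O}.Finite := orb_fin (st := st)
  -- values of the invariant on the two parts
  have hzero : ∀ q, {O : Set ℕ | COrbit Q st O ∧ O.ncard = q}.ncard = if q = 3 then m0 else 0 := by
    intro q
    have h1 := hf (0, q)
    have h2 : {O : Set Thread | NOrbit Q st O ∧ pN O = 0 ∧ qN O = q} = ∅ := by
      ext O
      simp only [Set.mem_setOf_eq, Set.mem_empty_iff_false, iff_false, not_and]
      intro hO h0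
      exact absurd h0 (hpos O hO).ne'
    simp only [fInv, charFn, h2, Set.ncard_empty, zero_add, true_and, Prod.mk.injEq] at h1
    rw [h1]
    split_ifs <;> simp_all
  have hposv : ∀ p q, 0 < p → {O : Set Thread | NOrbit Q st O ∧ pN O = p ∧ qN O = q}.ncard =
      if (p = p0 + m0 + 2 ∧ q = p0) then 1 else 0 := by
    intro p q hp
    have h1 := hf (p, q)
    have h2 : {O : Set ℕ | COrbit Q st O ∧ p = 0 ∧ O.ncard = q} = ∅ := by
      ext O
      simp only [Set.mem_setOf_eq, Set.mem_empty_iff_false, iff_false, not_and]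
      intro _ h0
      omega
    simp only [fInv, charFn, h2, Set.ncard_empty, add_zero, Prod.mk.injEq] at h1
    rw [h1, if_neg (by omega : ¬ (p = 0 ∧ q = 3))]
    simp
  have hO3 : ∀ O, COrbit Q st O → O.ncard = 3 := by
    intro O hO
    by_contra hn
    have h1 := hzero O.ncard
    rw [if_neg hn, Set.ncard_eq_zero (hCOfin.subset fun _ h => h.1)] at h1
    exact Set.eq_empty_iff_forall_notMem.1 h1 O ⟨hO, rfl⟩
  have h3 : ∀ a, InC Q st a → (orb st a).ncard = 3 := fun a ha => hO3 _ ⟨a, ha, rfl⟩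
  have hm0 : {O : Set ℕ | COrbit Q st O}.ncard = m0 := by
    have h1 := hzero 3
    rw [if_pos rfl] at h1
    rw [← h1]
    congr 1
    ext O
    exact ⟨fun hO => ⟨hO, hO3 O hO⟩, fun hO => hO.1⟩
  have hval : ∀ O, NOrbit Q st O → pN O = p0 + m0 + 2 ∧ qN O = p0 := by
    intro O hO
    by_contra hn
    have h1 := hposv (pN O) (qN O) (hpos O hO)
    rw [if_neg hn, Set.ncard_eq_zero (hNOfin.subset fun _ h => h.1)] at h1
    exact Set.eq_empty_iff_forall_notMem.1 h1 O ⟨hO, rfl, rfl⟩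
  have hone := hposv (p0 + m0 + 2) p0 (by omega)
  rw [if_pos ⟨rfl, rfl⟩, Set.ncard_eq_one] at hone
  obtain ⟨O, hO⟩ := hone
  have hOO : NOrbit Q st O := by
    have : O ∈ ({O} : Set (Set Thread)) := rfl
    rw [← hO] at this
    exact this.1
  have hOuniq : ∀ O', NOrbit Q st O' → O' = O := by
    intro O' hO'
    have : O' ∈ ({O} : Set (Set Thread)) := by
      rw [← hO]
      exact ⟨hO', hval O' hO'⟩
    exact this
  have hON : O = {w | InN Q st w} := by
    ext w
    constructor
    · intro hw
      obtain ⟨w0, hw0, rfl⟩ := hOO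
      exact norb_sub hw0 hw
    · intro hw
      rw [← hOuniq _ ⟨w, hw, rfl⟩]
      exact .refl w
  have hp := (hval O hOO).1
  have hq := (hval O hOO).2
  have c1 := N_card (st := st) h he
  have c2 := len_sum (st := st) h he
  have c3 := CF_card h3
  unfold pN at hp
  rw [hON] at hp hq
  rw [hp] at c1
  rw [hq] at c2
  rw [hm0] at c3
  -- counting the cycles
  obtain ⟨ψ, hψ, -⟩ := exists_psi (st := st) h
  have hcyc : {t : ℕ × ℕ × ℕ | Is3Cycle Q t.1 t.2.1 t.2.2} =
      ((CF st).image fun a => (a, ψ a, ψ (ψ a)) : Finset (ℕ × ℕ × ℕ)) := by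
    ext ⟨a, b, c⟩
    simp only [Set.mem_setOf_eq, Finset.coe_image, Set.mem_image, Finset.mem_coe, mem_CF,
      Prod.mk.injEq]
    constructor
    · intro ht
      obtain ⟨ha, e1, e2⟩ := cycle_in h he hne hc (by omega) hψ h3 ht
      exact ⟨a, ha, rfl, e1.symm, e2.symm⟩
    · rintro ⟨a, ha, rfl, rfl, rfl⟩
      exact triangle h hψ ha (h3 a ha)
  rw [hcyc, Set.ncard_coe_finset, Finset.card_image_of_injective _
    (fun a b e => (Prod.mk.inj e).1), c3] at hm
  have hmm : m = m0 := by omega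
  subst hmm
  refine ⟨by omega, fun x => ?_⟩
  rw [hf x]
  have e1 : Q.V.card + 1 - m = p0 + m + 2 := by omega
  have e2 : Q.V.card - 1 - 2 * m = p0 := by omega
  rw [e1, e2]

end GentleQuiv
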